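/- The following two assertions are equivalent: (1) every Peano continuum that is a topological fractal contains a self-regenerating fractal with nonempty interior; (2) every Peano continuum contains a Peano self-regenerating fractal (i.e., a self-regenerating fractal that is a Peano continuum) with nonempty interior. -/

import Mathlib

/-- A family `F` of self-maps of a metric space `X` is topologically contractive if for
every `ε > 0` there is `k` such that every composition of `k` maps from `F` has image of
diameter less than `ε`. -/
def TopContractive {X : Type*} [MetricSpace X] (F : Set (X → X)) : Prop :=
  ∀ ε > (0 : ℝ), ∃ k : ℕ, ∀ l : List (X → X), (∀ f ∈ l, f ∈ F) → l.length = k →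
    Metric.diam (Set.range (l.foldr (· ∘ ·) id)) < ε

/-- `X` is a topological fractal if some finite topologically contractive family of
continuous self-maps of `X` has images covering `X`. -/
def IsTopFractal (X : Type*) [MetricSpace X] : Prop :=
  ∃ F : Set (X → X), F.Finite ∧ (∀ f ∈ F, Continuous f) ∧
    TopContractive F ∧ (⋃ f ∈ F, Set.range f) = Set.univ

/-- A metric space `A` is a self-regenerating fractal if for every nonempty open
`U ⊆ A` there is a finite topologically contractive family of continuous self-maps of
`A`, each constant outside `U`, whose images cover `A`. -/
def SelfRegenFractal (A : Type*) [MetricSpace A] : Prop :=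
  ∀ U : Set A, IsOpen U → U.Nonempty →
    ∃ F : Set (A → A), F.Finite ∧ (∀ f ∈ F, Continuous f) ∧
      (∀ f ∈ F, ∀ x y, x ∉ U → y ∉ U → f x = f y) ∧
      TopContractive F ∧ (⋃ f ∈ F, Set.range f) = Set.univ

/-!
For a nondegenerate Peano continuum `X` with points `a ≠ b`, glue countably many copies of `X` into
a chain, the point `b` of each copy to the point `a` of the next one, and compactify by one point.
Doing the same with copies of this chain yields the double chain, which is a topological fractal:
one self-map shifts the chains by one place, the other folds the double chain onto its first chain,
mapping the `m`-th chain onto the `m`-th copy of `X`. The fold maps factor through a path running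
through all of `X`, parametrised by the average of a function over so many consecutive copies of `X`
that each copy becomes small.

The double chain retracts onto its copies of `X`. These retractions separate points and are
injective outside the preimages of `a` and `b`. A component of a self-regenerating fractal which has
nonempty interior is again a self-regenerating fractal, and so is the image of a self-regenerating
continuum under a retraction which is injective off a finite set. Finally, connected topological
fractals are locally connected, because they are finite unions of small continua.
-/

open Set Filter Topology
open scoped Pointwise Uniformity unitInterval

section Compositions

variable {X Y : Type*}

/-- The set of all compositions of `k` maps from `F`, i.e. the `k`-th power of `F` in the monoid
of self-maps of `X`. -/
def compositions (F : Set (X → X)) (k : ℕ) : Set (X → X) :=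
  (show Set (Function.End X) from F) ^ k

theorem compositions_zero (F : Set (X → X)) : compositions F 0 = {id} :=
  pow_zero (M := Set (Function.End X)) F

theorem compositions_succ (F : Set (X → X)) (k : ℕ) :
    compositions F (k + 1) = image2 (· ∘ ·) F (compositions F k) :=
  pow_succ' (M := Set (Function.End X)) F k

theorem compositions_succ_right (F : Set (X → X)) (k : ℕ) :
    compositions F (k + 1) = image2 (· ∘ ·) (compositions F k) F :=
  pow_succ (M := Set (Function.End X)) F k

theorem comp_mem_compositions {F : Set (X → X)} {k : ℕ} {f g : X → X} (hf : f ∈ F)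
    (hg : g ∈ compositions F k) : f ∘ g ∈ compositions F (k + 1) := by
  rw [compositions_succ]
  exact mem_image2_of_mem hf hg

theorem monotone_compositions {F : Set (X → X)} (hF : id ∈ F) : Monotone (compositions F) :=
  fun _ _ h => pow_subset_pow_right (show (1 : Function.End X) ∈ F from hF) h

theorem id_mem_compositions {F : Set (X → X)} (hF : id ∈ F) (k : ℕ) : id ∈ compositions F k :=
  monotone_compositions hF k.zero_le (by rw [compositions_zero]; rfl)

theorem finite_compositions {F : Set (X → X)} (hF : F.Finite) (k : ℕ) :
    (compositions F k).Finite := by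
  induction k with
  | zero => rw [compositions_zero]; exact finite_singleton id
  | succ k ih => rw [compositions_succ]; exact hF.image2 _ ih

theorem mem_compositions {F : Set (X → X)} {k : ℕ} {g : X → X} :
    g ∈ compositions F k ↔
      ∃ l : List (X → X), (∀ f ∈ l, f ∈ F) ∧ l.length = k ∧ l.foldr (· ∘ ·) id = g := by
  induction k generalizing g with
  | zero =>
    rw [compositions_zero, mem_singleton_iff]
    constructor
    · rintro rfl
      exact ⟨[], by simp, rfl, rfl⟩
    · rintro ⟨l, -, hl, rfl⟩
      rw [List.length_eq_zero_iff.1 hl, List.foldr_nil]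
  | succ k ih =>
    simp only [compositions_succ, mem_image2, ih]
    constructor
    · rintro ⟨f, hf, _, ⟨l, hl, rfl, rfl⟩, rfl⟩
      exact ⟨f :: l, by simpa using ⟨hf, hl⟩, rfl, rfl⟩
    · rintro ⟨_ | ⟨f, l⟩, hl, hlen, rfl⟩
      · simp at hlen
      · rw [List.forall_mem_cons] at hl
        exact ⟨f, hl.1, _, ⟨l, hl.2, by simpa using hlen, rfl⟩, rfl⟩

theorem iUnion_range_compositions {F : Set (X → X)} (hF : ⋃ f ∈ F, range f = univ) (k : ℕ) :
    ⋃ g ∈ compositions F k, range g = univ := by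
  refine eq_univ_of_forall fun x => ?_
  induction k generalizing x with
  | zero => simp [compositions_zero]
  | succ k ih =>
    obtain ⟨f, hf, y, rfl⟩ := mem_iUnion₂.1 (hF.symm ▸ mem_univ x)
    obtain ⟨g, hg, z, rfl⟩ := mem_iUnion₂.1 (ih y)
    exact mem_iUnion₂.2 ⟨f ∘ g, comp_mem_compositions hf hg, z, rfl⟩

theorem continuous_of_mem_compositions [TopologicalSpace X] {F : Set (X → X)}
    (hF : ∀ f ∈ F, Continuous f) {k : ℕ} {g : X → X} (hg : g ∈ compositions F k) :
    Continuous g := by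
  induction k generalizing g with
  | zero =>
    rw [compositions_zero, mem_singleton_iff] at hg
    exact hg ▸ continuous_id
  | succ k ih =>
    rw [compositions_succ] at hg
    obtain ⟨f, hf, g, hg, rfl⟩ := hg
    exact (hF f hf).comp (ih hg)

theorem exists_semiconj_of_mem_compositions {F : Set (X → X)} {G : Set (Y → Y)} {r : X → Y}
    (h : ∀ g ∈ G, ∃ f ∈ F, Function.Semiconj r f g) {k : ℕ} {g : Y → Y}
    (hg : g ∈ compositions G k) : ∃ f ∈ compositions F k, Function.Semiconj r f g := by
  induction k generalizing g with
  | zero =>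
    rw [compositions_zero, mem_singleton_iff] at hg
    exact ⟨id, by rw [compositions_zero]; rfl, hg ▸ .id_right⟩
  | succ k ih =>
    rw [compositions_succ] at hg
    obtain ⟨g₁, hg₁, g₂, hg₂, rfl⟩ := hg
    obtain ⟨f₁, hf₁, h₁⟩ := h g₁ hg₁
    obtain ⟨f₂, hf₂, h₂⟩ := ih hg₂
    exact ⟨f₁ ∘ f₂, comp_mem_compositions hf₁ hf₂, h₁.comp_right h₂⟩

theorem uniformEquicontinuous_compositions [UniformSpace X] {F : Set (X → X)}
    (hF : F.UniformEquicontinuous) (k : ℕ) : (compositions F k).UniformEquicontinuous := by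
  induction k with
  | zero =>
    intro U hU
    filter_upwards [hU] with p hp
    rintro ⟨g, hg⟩
    rw [compositions_zero, mem_singleton_iff] at hg
    exact hg ▸ hp
  | succ k ih =>
    intro U hU
    filter_upwards [ih _ (hF U hU)] with p hp
    rintro ⟨_, hg⟩
    rw [compositions_succ] at hg
    obtain ⟨f, hf, g', hg', rfl⟩ := hg
    exact hp ⟨g', hg'⟩ ⟨f, hf⟩

theorem uniformEquicontinuous_insert_id [UniformSpace X] {F : Set (X → X)}
    (hF : F.UniformEquicontinuous) : (insert id F).UniformEquicontinuous := by
  intro U hU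
  filter_upwards [hU, hF U hU] with p hid hp
  rintro ⟨f, rfl | hf⟩
  exacts [hid, hp ⟨f, hf⟩]

theorem topContractive_iff [MetricSpace X] {F : Set (X → X)} :
    TopContractive F ↔
      ∀ ε > 0, ∃ k, ∀ g ∈ compositions F k, Metric.diam (range g) < ε := by
  simp only [TopContractive, mem_compositions]
  refine forall₂_congr fun ε _ => exists_congr fun k => ⟨?_, fun h l hl hk => h _ ⟨l, hl, hk, rfl⟩⟩
  rintro h _ ⟨l, hl, hk, rfl⟩
  exact h l hl hk

end Compositions

section Fractals

theorem locallyConnectedSpace_of_finite_closed_covers {X : Type*} [PseudoMetricSpace X]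
    (h : ∀ ε > 0, ∃ 𝒞 : Set (Set X), 𝒞.Finite ∧ ⋃₀ 𝒞 = univ ∧
      ∀ C ∈ 𝒞, IsClosed C ∧ IsPreconnected C ∧ ∀ x ∈ C, ∀ y ∈ C, dist x y < ε) :
    LocallyConnectedSpace X := by
  rw [locallyConnectedSpace_iff_connected_subsets]
  intro x U hU
  obtain ⟨ε, hε, hεU⟩ := Metric.mem_nhds_iff.1 hU
  obtain ⟨𝒞, hfin, hcov, h𝒞⟩ := h ε hε
  have hclosed : IsClosed (⋃₀ {C ∈ 𝒞 | x ∉ C}) :=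
    sUnion_eq_biUnion ▸ (hfin.subset (sep_subset _ _)).isClosed_biUnion fun C hC => (h𝒞 C hC.1).1
  refine ⟨⋃₀ {C ∈ 𝒞 | x ∈ C}, mem_of_superset (hclosed.isOpen_compl.mem_nhds ?_) ?_,
    isPreconnected_sUnion x _ (fun C hC => hC.2) fun C hC => (h𝒞 C hC.1).2.1,
    sUnion_subset fun C hC y hy => hεU ((h𝒞 C hC.1).2.2 y hy x hC.2)⟩
  · rintro ⟨C, hC, hxC⟩
    exact hC.2 hxC
  · intro y hy
    obtain ⟨C, hC, hyC⟩ := hcov.symm ▸ mem_univ y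
    exact ⟨C, ⟨hC, by_contra fun hxC => hy ⟨C, ⟨hC, hxC⟩, hyC⟩⟩, hyC⟩

theorem IsTopFractal.locallyConnectedSpace {X : Type*} [MetricSpace X] [CompactSpace X]
    [PreconnectedSpace X] (h : IsTopFractal X) : LocallyConnectedSpace X := by
  obtain ⟨F, hfin, hcont, hcontr, hcov⟩ := h
  refine locallyConnectedSpace_of_finite_closed_covers fun ε hε => ?_
  obtain ⟨k, hk⟩ := topContractive_iff.1 hcontr ε hε
  refine ⟨range '' compositions F k, (finite_compositions hfin k).image _, ?_, ?_⟩
  · rw [sUnion_image, iUnion_range_compositions hcov]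
  · rintro _ ⟨g, hg, rfl⟩
    have hgc := continuous_of_mem_compositions hcont hg
    exact ⟨(isCompact_range hgc).isClosed, isPreconnected_range hgc, fun x hx y hy =>
      (Metric.dist_le_diam_of_mem Metric.isBounded_of_compactSpace hx hy).trans_lt (hk g hg)⟩

theorem SelfRegenFractal.isTopFractal {A : Type*} [MetricSpace A] [Nonempty A]
    (h : SelfRegenFractal A) : IsTopFractal A := by
  obtain ⟨F, hfin, hcont, -, hcontr, hcov⟩ := h univ isOpen_univ univ_nonempty
  exact ⟨F, hfin, hcont, hcontr, hcov⟩

theorem SelfRegenFractal.of_subsingleton {A : Type*} [MetricSpace A] [Subsingleton A] :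
    SelfRegenFractal A := by
  refine fun U _ _ => ⟨{id}, finite_singleton id, by simpa using continuous_id,
    fun f _ x y _ _ => congrArg f (Subsingleton.elim x y), fun ε hε => ⟨0, fun l _ _ => ?_⟩,
    by simp⟩
  rwa [Metric.diam_subsingleton subsingleton_of_subsingleton]

theorem topContractive_of_forall_dist_lt {A : Type*} [MetricSpace A] {F : Set (A → A)}
    (h : ∀ ε > 0, ∃ k, ∀ g ∈ compositions F k, ∀ x y, dist (g x) (g y) < ε) :
    TopContractive F := by
  refine topContractive_iff.2 fun ε hε => ?_
  obtain ⟨k, hk⟩ := h (ε / 2) (half_pos hε)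
  refine ⟨k, fun g hg => (Metric.diam_le_of_forall_dist_le (half_pos hε).le ?_).trans_lt
    (half_lt_self hε)⟩
  rintro _ ⟨x, rfl⟩ _ ⟨y, rfl⟩
  exact (hk g hg x y).le

theorem TopContractive.of_semiconj {A B : Type*} [MetricSpace A] [CompactSpace A] [MetricSpace B]
    {F : Set (A → A)} {G : Set (B → B)} (hF : TopContractive F) {r : A → B} (hr : Continuous r)
    (hsurj : Function.Surjective r) (h : ∀ g ∈ G, ∃ f ∈ F, Function.Semiconj r f g) :
    TopContractive G := by
  refine topContractive_of_forall_dist_lt fun ε hε => ?_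
  obtain ⟨δ, hδ, hrδ⟩ := Metric.uniformContinuous_iff.1
    (CompactSpace.uniformContinuous_of_continuous hr) ε hε
  obtain ⟨k, hk⟩ := topContractive_iff.1 hF δ hδ
  refine ⟨k, fun g hg => hsurj.forall₂.2 fun x y => ?_⟩
  obtain ⟨f, hf, hfg⟩ := exists_semiconj_of_mem_compositions h hg
  rw [← hfg, ← hfg]
  exact hrδ ((Metric.dist_le_diam_of_mem Metric.isBounded_of_compactSpace (mem_range_self x)
    (mem_range_self y)).trans_lt (hk f hf))

theorem SelfRegenFractal.of_retraction {A B : Type*} [MetricSpace A] [CompactSpace A]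
    [MetricSpace B] (hA : SelfRegenFractal A) {r : A → B} {e : B → A} (hr : Continuous r)
    (he : Continuous e) (hre : Function.LeftInverse r e) {K : Set B} (hK : IsClosed K)
    (hKi : interior K = ∅) (her : ∀ x, r x ∉ K → e (r x) = x) : SelfRegenFractal B := by
  intro U hU hUne
  have hne : (U \ K).Nonempty := by
    rw [nonempty_iff_ne_empty, Ne, sdiff_eq_empty]
    exact fun h => hUne.ne_empty (subset_empty_iff.1 (hKi ▸ interior_maximal h hU))
  obtain ⟨F, hfin, hcont, hconst, hcontr, hcov⟩ := hA (r ⁻¹' (U \ K))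
    ((hU.sdiff hK).preimage hr) (hne.preimage hre.surjective)
  have hfer : ∀ f ∈ F, ∀ x, f (e (r x)) = f x := fun f hf x => by
    by_cases hx : r x ∈ U \ K
    · rw [her x hx.2]
    · exact hconst f hf _ _ (by rwa [mem_preimage, hre]) hx
  refine ⟨(fun f => r ∘ f ∘ e) '' F, hfin.image _, ?_, ?_, ?_, ?_⟩
  · rintro _ ⟨f, hf, rfl⟩
    exact hr.comp ((hcont f hf).comp he)
  · rintro _ ⟨f, hf, rfl⟩ x y hx hy
    refine congrArg r (hconst f hf _ _ ?_ ?_) <;> rw [mem_preimage, hre]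
    exacts [fun h => hx h.1, fun h => hy h.1]
  · refine hcontr.of_semiconj hr hre.surjective ?_
    rintro _ ⟨f, hf, rfl⟩
    exact ⟨f, hf, fun x => congrArg r (hfer f hf x).symm⟩
  · refine eq_univ_of_forall fun y => ?_
    obtain ⟨f, hf, x, hx⟩ := mem_iUnion₂.1 (hcov.symm ▸ mem_univ (e y))
    refine mem_iUnion₂.2 ⟨_, mem_image_of_mem _ hf, r x, ?_⟩
    simp only [Function.comp_apply, hfer f hf, hx, hre y]

theorem range_eq_image_of_const_off {A B : Type*} {f : A → B} {U C : Set A} {z : A}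
    (hf : ∀ x y, x ∉ U → y ∉ U → f x = f y) (hUC : U ⊆ C) (hzC : z ∈ C) (hzU : z ∉ U) :
    range f = f '' C := by
  refine (image_subset_range _ _).antisymm' ?_
  rintro _ ⟨x, rfl⟩
  by_cases hx : x ∈ U
  · exact mem_image_of_mem f (hUC hx)
  · exact ⟨z, hzC, hf z x hzU hx⟩

-- Maps that are constant outside a proper subset of a component have connected images, so the
-- images missing the component cover its complement.
theorem SelfRegenFractal.isOpen_connectedComponent {A : Type*} [MetricSpace A] [CompactSpace A]
    (hA : SelfRegenFractal A) {a : A} (ha : connectedComponent a ∈ 𝓝 a)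
    (hnt : (connectedComponent a).Nontrivial) : IsOpen (connectedComponent a) := by
  set C := connectedComponent a
  obtain ⟨z, hzC, hza⟩ := hnt.exists_ne a
  obtain ⟨F, hfin, hcont, hconst, -, hcov⟩ := hA (interior C \ {z})
    (isOpen_interior.sdiff isClosed_singleton) ⟨a, mem_interior_iff_mem_nhds.2 ha, hza.symm⟩
  have hpre : ∀ f ∈ F, IsPreconnected (range f) := fun f hf => by
    rw [range_eq_image_of_const_off (hconst f hf) (sdiff_subset.trans interior_subset) hzC
      fun h => h.2 rfl]
    exact isPreconnected_connectedComponent.image f (hcont f hf).continuousOn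
  have hcompl : Cᶜ = ⋃ f ∈ {f ∈ F | Disjoint (range f) C}, range f := by
    refine (iUnion₂_subset fun f hf => hf.2.subset_compl_right).antisymm' fun x hx => ?_
    obtain ⟨f, hf, hxf⟩ := mem_iUnion₂.1 (hcov.symm ▸ mem_univ x)
    refine mem_iUnion₂.2 ⟨f, ⟨hf, disjoint_left.2 fun w hwf hwC => hx ?_⟩, hxf⟩
    rw [show C = connectedComponent w from connectedComponent_eq hwC]
    exact (hpre f hf).subset_connectedComponent hwf hxf
  rw [← isClosed_compl_iff, hcompl]
  exact (hfin.subset (sep_subset _ _)).isClosed_biUnion fun f hf =>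
    (isCompact_range (hcont f hf.1)).isClosed

theorem SelfRegenFractal.of_isOpenEmbedding {A B : Type*} [MetricSpace A] [CompactSpace A]
    [MetricSpace B] (hA : SelfRegenFractal A) {e : B → A} (he : IsOpenEmbedding e)
    (hcl : IsClosed (range e)) (b : B) [(𝓝[≠] b).NeBot] : SelfRegenFractal B := by
  set r : A → B := Function.extend e id fun _ => b
  have hre : Function.LeftInverse r e := he.injective.extend_apply id _
  have hout : ∀ x ∉ range e, r x = b := Function.extend_apply' id _
  have hr : Continuous r := continuous_iff_continuousAt.2 fun x => by
    by_cases hx : x ∈ range e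
    · obtain ⟨y, rfl⟩ := hx
      exact he.continuousAt_iff.1 (hre.comp_eq_id ▸ continuousAt_id)
    · refine continuousAt_const.congr (f := fun _ => b) ?_
      filter_upwards [hcl.isOpen_compl.mem_nhds hx] with y hy using (hout y hy).symm
  refine hA.of_retraction hr he.continuous hre isClosed_singleton (interior_singleton b)
    fun x hx => ?_
  obtain ⟨y, rfl⟩ : x ∈ range e := by_contra fun h => hx (hout x h)
  rw [hre]

theorem SelfRegenFractal.exists_isConnected {Y : Type*} [MetricSpace Y] [ConnectedSpace Y]
    [LocallyConnectedSpace Y] [Nontrivial Y] {R : Set Y} (hR : IsCompact R)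
    (hreg : SelfRegenFractal R) (hint : (interior R).Nonempty) :
    ∃ C : Set Y, IsCompact C ∧ IsConnected C ∧ SelfRegenFractal C ∧ (interior C).Nonempty := by
  have : CompactSpace R := isCompact_iff_compactSpace.1 hR
  obtain ⟨y, hy⟩ := hint
  have hyR : y ∈ R := interior_subset hy
  have hnhds : connectedComponentIn R y ∈ 𝓝 y :=
    connectedComponentIn_mem_nhds (mem_interior_iff_mem_nhds.1 hy)
  have himage := connectedComponentIn_eq_image hyR
  have hnt : (connectedComponentIn R y).Nontrivial := (infinite_of_mem_nhds y hnhds).nontrivial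
  have hrange : range (inclusion (connectedComponentIn_subset R y)) =
      connectedComponent (⟨y, hyR⟩ : R) := by
    rw [range_inclusion, himage]
    exact preimage_image_eq _ Subtype.val_injective
  have hopen : IsOpen (connectedComponent (⟨y, hyR⟩ : R)) := by
    refine hreg.isOpen_connectedComponent ?_ (nontrivial_of_image _ _ (himage ▸ hnt))
    rw [← hrange, range_inclusion]
    exact continuousAt_subtype_val.preimage_mem_nhds hnhds
  have hconn : IsConnected (connectedComponentIn R y) := isConnected_connectedComponentIn_iff.2 hyR
  refine ⟨connectedComponentIn R y, ?_, hconn, ?_, y,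
    mem_interior_iff_mem_nhds.2 hnhds⟩
  · exact himage ▸ isClosed_connectedComponent.isCompact.image continuous_subtype_val
  · have := hnt.coe_sort
    have := isConnected_iff_connectedSpace.1 hconn
    exact hreg.of_isOpenEmbedding ⟨.inclusion _, hrange ▸ hopen⟩
      (hrange ▸ isClosed_connectedComponent) ⟨y, mem_connectedComponentIn hyR⟩

end Fractals

section HahnMazurkiewicz

section Walks

variable {X : Type*} [PseudoMetricSpace X] {S : Set X} {η : ℝ} {x y z : X} {c d : ℕ → X} {m n : ℕ}

/-- A walk from `x` to `y` inside `S` with steps shorter than `η` that rests at `y` from time `n`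
on. Since it may arrive earlier, it is also such a walk for every larger value of `n`. -/
structure IsWalk (S : Set X) (η : ℝ) (x y : X) (c : ℕ → X) (n : ℕ) : Prop where
  start : c 0 = x
  rest : ∀ j, n ≤ j → c j = y
  mem : ∀ j, c j ∈ S
  step : ∀ j, dist (c j) (c (j + 1)) < η

/-- A walk that comes `η`-close to every point of `S` before time `n`. -/
structure IsDenseWalk (S : Set X) (η : ℝ) (x y : X) (c : ℕ → X) (n : ℕ) : Prop
    extends IsWalk S η x y c n where
  dense : ∀ z ∈ S, ∃ j < n, dist z (c j) < η

theorem IsWalk.dist_lt (hc : IsWalk S η x y c n) {i j : ℕ} (hij : i ≤ j + 1) (hji : j ≤ i + 1) :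
    dist (c i) (c j) < η := by
  obtain rfl | rfl | rfl : i = j ∨ i = j + 1 ∨ j = i + 1 := by omega
  · exact dist_self (c i) ▸ dist_nonneg.trans_lt (hc.step 0)
  · exact dist_comm (c j) _ ▸ hc.step j
  · exact hc.step i

theorem IsWalk.const (hη : 0 < η) (hx : x ∈ S) : IsWalk S η x x (fun _ => x) n :=
  ⟨rfl, fun _ _ => rfl, fun _ => hx, fun _ => by rwa [dist_self]⟩

theorem IsWalk.trans (hc : IsWalk S η x y c m) (hd : IsWalk S η y z d n) :
    IsWalk S η x z (fun j => if j ≤ m then c j else d (j - m)) (m + n) := by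
  have hlast : d 0 = c m := hd.start.trans (hc.rest m le_rfl).symm
  refine ⟨by simp [hc.start], fun j hj => ?_, fun j => ?_, fun j => ?_⟩
  · rcases lt_or_ge m j with h | h
    · simpa only [h.not_ge, if_false] using hd.rest (j - m) (by omega)
    · obtain ⟨rfl, rfl⟩ : j = m ∧ n = 0 := by omega
      simpa only [le_rfl, if_true, hlast] using hd.rest 0 le_rfl
  · split_ifs
    exacts [hc.mem j, hd.mem _]
  · rcases lt_trichotomy j m with h | rfl | h
    · simpa only [h.le, Nat.succ_le_of_lt h, if_true] using hc.step j
    · simpa [hlast] using hd.step 0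
    · simpa only [h.not_ge, (h.trans j.lt_succ_self).not_ge, if_false, Nat.succ_sub h.le]
        using hd.step (j - m)

theorem exists_isWalk (hS : IsPreconnected S) (hη : 0 < η) (hx : x ∈ S) (hy : y ∈ S) :
    ∃ c n, IsWalk S η x y c n := by
  have single : ∀ u ∈ S, ∀ v ∈ S, dist u v < η → ∃ c n, IsWalk S η u v c n := by
    intro u hu v hv huv
    refine ⟨fun j => if j = 0 then u else v, 1, if_pos rfl, fun j hj => if_neg (by omega),
      fun j => ?_, fun j => ?_⟩
    · split_ifs <;> assumption
    · rcases j.eq_zero_or_pos with rfl | hj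
      · simpa using huv
      · simpa [hj.ne'] using hη
  refine hS.induction₂' (fun u v => ∃ c n, IsWalk S η u v c n) (fun u hu => ?_) ?_ hx hy
  · filter_upwards [self_mem_nhdsWithin, mem_nhdsWithin_of_mem_nhds (Metric.ball_mem_nhds u hη)]
      with v hv huv
    exact ⟨single u hu v hv (Metric.mem_ball'.1 huv), single v hv u hu huv⟩
  · rintro u v w - - - ⟨c, m, hc⟩ ⟨d, n, hd⟩
    exact ⟨_, _, hc.trans hd⟩

theorem exists_isWalk_visiting (hS : IsPreconnected S) (hη : 0 < η) {T : Set X} (hT : T.Finite)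
    (hTS : T ⊆ S) (hx : x ∈ S) (hy : y ∈ S) : ∃ c n, IsWalk S η x y c n ∧ T ⊆ range c := by
  induction T, hT using Set.Finite.induction_on generalizing x with
  | empty =>
    obtain ⟨c, n, hc⟩ := exists_isWalk hS hη hx hy
    exact ⟨c, n, hc, empty_subset _⟩
  | @insert z T _ _ ih =>
    have hzS : z ∈ S := hTS (mem_insert _ _)
    obtain ⟨c, m, hc⟩ := exists_isWalk hS hη hx hzS
    obtain ⟨d, n, hd, hdT⟩ := ih ((subset_insert _ _).trans hTS) hzS
    refine ⟨_, _, hc.trans hd, insert_subset ⟨m, ?_⟩ fun w hw => ?_⟩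
    · simpa only [le_rfl, if_true] using hc.rest m le_rfl
    · obtain ⟨j, rfl⟩ := hdT hw
      refine ⟨m + j, ?_⟩
      rcases j.eq_zero_or_pos with rfl | hj
      · simp [hc.rest m le_rfl, hd.start]
      · simp [hj.ne']

theorem eventually_exists_isDenseWalk (hS : IsPreconnected S) (hSb : TotallyBounded S)
    (hη : 0 < η) (hx : x ∈ S) (hy : y ∈ S) :
    ∀ᶠ n in atTop, ∃ c, IsDenseWalk S η x y c n := by
  obtain ⟨T, hTS, hT, hcov⟩ := totallyBounded_iff_subset.1 hSb _ (Metric.dist_mem_uniformity hη)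
  obtain ⟨c, n, hc, hTc⟩ := exists_isWalk_visiting hS hη hT hTS hx hy
  filter_upwards [eventually_gt_atTop n] with k hk
  refine ⟨c, ⟨hc.start, fun j hj => hc.rest j (hk.le.trans hj), hc.mem, hc.step⟩, fun z hz => ?_⟩
  obtain ⟨w, hw, hzw⟩ := mem_iUnion₂.1 (hcov hz)
  obtain ⟨j, rfl⟩ := hTc hw
  refine ⟨min j n, (min_le_right j n).trans_lt hk, ?_⟩
  rcases le_total j n with h | h
  · rwa [min_eq_left h]
  · rwa [min_eq_right h, hc.rest n le_rfl, ← hc.rest j h]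

/-- The sequence consisting of the first `K` terms of `c 0`, the first `K` terms of `c 1`, etc. -/
def concatenation {α : Type*} (c : ℕ → ℕ → α) (K : ℕ) (m : ℕ) : α :=
  c (m / K) (m % K)

theorem concatenation_mul_add {α : Type*} {c : ℕ → ℕ → α} {K : ℕ}
    (hc : ∀ i, c i K = c (i + 1) 0) (hK : 0 < K) (i : ℕ) {j : ℕ} (hj : j ≤ K) :
    concatenation c K (i * K + j) = c i j := by
  rcases hj.lt_or_eq with hj | rfl
  · rw [concatenation, mul_comm, Nat.mul_add_div hK, Nat.div_eq_of_lt hj, Nat.mul_add_mod,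
      Nat.mod_eq_of_lt hj, add_zero]
  · rw [← Nat.succ_mul, concatenation, Nat.mul_div_cancel _ hK, Nat.mul_mod_left, hc]

theorem exists_ball_subset_connectedComponentIn [CompactSpace X] [LocallyConnectedSpace X]
    {ε : ℝ} (hε : 0 < ε) :
    ∃ δ > 0, δ ≤ ε ∧ ∀ x : X, Metric.ball x δ ⊆ connectedComponentIn (Metric.ball x ε) x := by
  obtain ⟨δ, hδ, hδε⟩ := lebesgue_number_lemma_of_metric (s := (univ : Set X)) isCompact_univ
    (c := fun x : X => connectedComponentIn (Metric.ball x (ε / 2)) x)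
    (fun x => Metric.isOpen_ball.connectedComponentIn)
    (fun x _ => mem_iUnion.2 ⟨x, mem_connectedComponentIn (Metric.mem_ball_self (half_pos hε))⟩)
  refine ⟨min δ ε, lt_min hδ hε, min_le_right _ _, fun x => ?_⟩
  obtain ⟨i, hi⟩ := hδε x (mem_univ x)
  have hxi : x ∈ connectedComponentIn (Metric.ball i (ε / 2)) i := hi (Metric.mem_ball_self hδ)
  refine (Metric.ball_subset_ball (min_le_left _ _)).trans (hi.trans ?_)
  refine isPreconnected_connectedComponentIn.subset_connectedComponentIn hxi fun y hy => ?_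
  have hyi := Metric.mem_ball.1 (connectedComponentIn_subset _ _ hy)
  have hxi := Metric.mem_ball.1 (connectedComponentIn_subset _ _ hxi)
  rw [Metric.mem_ball]
  linarith [dist_triangle_right y x i]

theorem IsDenseWalk.exists_refinement [CompactSpace X] {a b : X} {δ ε : ℝ}
    {p : ℕ → X} {N : ℕ} (hp : IsDenseWalk univ δ a b p N) (hε : 0 < ε) (hη : 0 < η)
    (hδ : ∀ x : X, Metric.ball x δ ⊆ connectedComponentIn (Metric.ball x ε) x) :
    ∃ q K, 0 < K ∧ IsDenseWalk univ η a b q (N * K) ∧ ∀ m, dist (p (m / K)) (q m) < ε := by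
  set C : ℕ → Set X := fun i => connectedComponentIn (Metric.ball (p i) ε) (p i)
  have hpC : ∀ i, p i ∈ C i := fun i => mem_connectedComponentIn (Metric.mem_ball_self hε)
  obtain ⟨K, hK, hK0⟩ : ∃ K, (∀ i ∈ Finset.range N, ∃ c,
      IsDenseWalk (C i) η (p i) (p (i + 1)) c K) ∧ 0 < K := by
    refine (((eventually_all_finset _).2 fun i _ => ?_).and (eventually_gt_atTop 0)).exists
    exact eventually_exists_isDenseWalk isPreconnected_connectedComponentIn
      (isCompact_univ.totallyBounded.subset (subset_univ _)) hη (hpC i)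
      (hδ _ (Metric.mem_ball'.2 (hp.step i)))
  have hwalks : ∀ i, ∃ c, IsWalk (C i) η (p i) (p (i + 1)) c K ∧
      (i < N → ∀ z ∈ C i, ∃ j < K, dist z (c j) < η) ∧ (N ≤ i → ∀ j, c j = b) := fun i => by
    rcases lt_or_ge i N with hi | hi
    · obtain ⟨c, hc⟩ := hK i (Finset.mem_range.2 hi)
      exact ⟨c, hc.toIsWalk, fun _ => hc.dense, fun h => absurd hi h.not_gt⟩
    · rw [hp.rest (i + 1) (by omega), ← hp.rest i hi]
      exact ⟨_, .const hη (hpC i), fun h => absurd hi h.not_ge, fun _ _ => rfl⟩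
  choose c hc hcd hcb using hwalks
  have hval : ∀ i {j}, j ≤ K → concatenation c K (i * K + j) = c i j :=
    concatenation_mul_add (fun i => ((hc i).rest K le_rfl).trans (hc (i + 1)).start.symm) hK0
  refine ⟨concatenation c K, K, hK0, ⟨⟨?_,
    fun m hm => hcb _ ((Nat.le_div_iff_mul_le hK0).2 hm) _, fun _ => mem_univ _, fun m => ?_⟩,
    fun z _ => ?_⟩, fun m => ?_⟩
  · rw [← hp.start, ← (hc 0).start, ← hval 0 K.zero_le, zero_mul]
  · have hm := m.mod_lt hK0
    rw [← Nat.div_add_mod' m K, hval _ hm.le, add_assoc, hval _ hm]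
    exact (hc _).step _
  · obtain ⟨i, hi, hz⟩ := hp.dense z (mem_univ z)
    obtain ⟨j, hj, hzj⟩ := hcd i hi z (hδ _ hz)
    exact ⟨i * K + j, by nlinarith, by rwa [hval i hj.le]⟩
  · exact Metric.mem_ball'.1 (connectedComponentIn_subset _ _ ((hc _).mem _))

end Walks

section Limits

variable {T X : Type*} [TopologicalSpace T] [MetricSpace X] [CompleteSpace X]

theorem exists_continuous_surjective_tendsto [CompactSpace T] {F : ℕ → T → X}
    (hF : ∀ n t, dist (F n t) (F (n + 1) t) ≤ 1 / 2 / 2 ^ n)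
    (hosc : ∀ n t, ∀ᶠ u in 𝓝 t, dist (F n t) (F n u) ≤ 1 / 2 ^ n)
    (hdense : ∀ n z, ∃ t, dist z (F n t) ≤ 1 / 2 ^ n) :
    ∃ φ : T → X, Continuous φ ∧ Function.Surjective φ ∧
      ∀ t, Tendsto (F · t) atTop (𝓝 (φ t)) := by
  choose φ hφ using fun t => cauchySeq_tendsto_of_complete (cauchySeq_of_le_geometric_two (hF · t))
  have hdist : ∀ n t, dist (F n t) (φ t) ≤ 1 / 2 ^ n := fun n t =>
    dist_le_of_le_geometric_two_of_tendsto (hF · t) (hφ t) n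
  have hsmall : ∀ ε > (0 : ℝ), ∃ n : ℕ, 3 * (1 / 2 ^ n) < ε := fun ε hε => by
    obtain ⟨n, hn⟩ := exists_pow_lt_of_lt_one (div_pos hε three_pos) one_half_lt_one
    refine ⟨n, ?_⟩
    rwa [one_div_pow, lt_div_iff₀' three_pos] at hn
  have hcont : Continuous φ := Metric.continuous_iff'.2 fun t ε hε => by
    obtain ⟨n, hn⟩ := hsmall ε hε
    filter_upwards [hosc n t] with u hu
    rw [dist_comm] at hu
    linarith [dist_triangle4 (φ u) (F n u) (F n t) (φ t), hdist n u, hdist n t,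
      dist_comm (φ u) (F n u)]
  refine ⟨φ, hcont, fun z => ?_, hφ⟩
  rw [← mem_range, ← (isCompact_range hcont).isClosed.closure_eq, Metric.mem_closure_range_iff]
  intro ε hε
  obtain ⟨n, hn⟩ := hsmall ε hε
  obtain ⟨t, ht⟩ := hdense n z
  refine ⟨t, ?_⟩
  linarith [dist_triangle z (F n t) (φ t), hdist n t, dist_nonneg (x := z) (y := F n t)]

end Limits

section Paths

variable {X : Type*}

/-- The step function on the unit interval running through the first terms of `c` at speed `N`. -/
noncomputable def stepFunction (c : ℕ → X) (N : ℕ) (t : I) : X :=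
  c ⌊(t : ℝ) * N⌋₊

theorem IsWalk.eventually_dist_stepFunction_lt [PseudoMetricSpace X] {S : Set X} {η : ℝ} {x y : X}
    {c : ℕ → X} {n : ℕ} (hc : IsWalk S η x y c n) (N : ℕ) (t : I) :
    ∀ᶠ u in 𝓝 t, dist (stepFunction c N t) (stepFunction c N u) < η := by
  have hfloor : ∀ u v : I, dist (u * N : ℝ) (v * N) < 1 → ⌊(u * N : ℝ)⌋₊ ≤ ⌊(v * N : ℝ)⌋₊ + 1 := by
    intro u v huv
    rw [← Nat.floor_add_one (mul_nonneg v.2.1 N.cast_nonneg)]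
    exact Nat.floor_le_floor (by linarith [(abs_lt.1 huv).2])
  have hcont : Continuous fun u : I => (u * N : ℝ) := by fun_prop
  filter_upwards [Metric.continuous_iff'.1 hcont t 1 one_pos] with u hu
  exact hc.dist_lt (hfloor t u (by rwa [dist_comm])) (hfloor u t hu)

theorem exists_stepFunction_eq {N j : ℕ} (hj : j < N) (c : ℕ → X) :
    ∃ t, stepFunction c N t = c j := by
  have hN : (0 : ℝ) < N := by exact_mod_cast j.zero_le.trans_lt hj
  refine ⟨⟨j / N, by positivity, (div_le_one hN).2 (by exact_mod_cast hj.le)⟩, ?_⟩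
  rw [stepFunction, div_mul_cancel₀ _ hN.ne', Nat.floor_natCast]

theorem dist_stepFunction_mul_lt [PseudoMetricSpace X] {p q : ℕ → X} {N K : ℕ} {ε : ℝ}
    (hK : 0 < K) (hpq : ∀ m, dist (p (m / K)) (q m) < ε) (t : I) :
    dist (stepFunction p N t) (stepFunction q (N * K) t) < ε := by
  have hfloor : ⌊(t : ℝ) * (N * K : ℕ)⌋₊ / K = ⌊(t : ℝ) * N⌋₊ := by
    rw [← Nat.floor_div_natCast, Nat.cast_mul, ← mul_assoc,
      mul_div_cancel_right₀ _ (by exact_mod_cast hK.ne')]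
  rw [stepFunction, ← hfloor]
  exact hpq _

/-- The **Hahn–Mazurkiewicz theorem**, with prescribed endpoints. -/
theorem exists_path_surjective [MetricSpace X] [CompactSpace X] [ConnectedSpace X]
    [LocallyConnectedSpace X] (a b : X) : ∃ γ : Path a b, Function.Surjective γ := by
  have hpow : ∀ n : ℕ, (0 : ℝ) < 1 / 2 / 2 ^ n := fun n => by positivity
  choose δ hδ0 hδle hδ using fun n : ℕ => exists_ball_subset_connectedComponentIn (X := X) (hpow n)
  have hδle' : ∀ n, δ n ≤ 1 / 2 ^ n := fun n => (hδle n).trans (by gcongr; norm_num)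
  obtain ⟨N₀, p₀, hp₀⟩ := (eventually_exists_isDenseWalk isPreconnected_univ
    isCompact_univ.totallyBounded (hδ0 0) (mem_univ a) (mem_univ b)).exists
  have hrefine : ∀ n (p : {p : (ℕ → X) × ℕ // IsDenseWalk univ (δ n) a b p.1 p.2}),
      ∃ q : {q : (ℕ → X) × ℕ // IsDenseWalk univ (δ (n + 1)) a b q.1 q.2}, ∀ t,
        dist (stepFunction p.1.1 p.1.2 t) (stepFunction q.1.1 q.1.2 t) < 1 / 2 / 2 ^ n := by
    rintro n ⟨⟨p, N⟩, hp⟩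
    obtain ⟨q, K, hK, hq, hpq⟩ := hp.exists_refinement (hpow n) (hδ0 (n + 1)) (hδ n)
    exact ⟨⟨(q, N * K), hq⟩, dist_stepFunction_mul_lt hK hpq⟩
  choose next hnext using hrefine
  let p : ∀ n, {p : (ℕ → X) × ℕ // IsDenseWalk univ (δ n) a b p.1 p.2} :=
    fun n => Nat.rec ⟨(p₀, N₀), hp₀⟩ next n
  obtain ⟨φ, hφ, hsurj, hlim⟩ := exists_continuous_surjective_tendsto
    (F := fun n => stepFunction (p n).1.1 (p n).1.2) (fun n t => (hnext n (p n) t).le)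
    (fun n t => ((p n).2.eventually_dist_stepFunction_lt _ t).mono
      fun u hu => hu.le.trans (hδle' n))
    (fun n z => by
      obtain ⟨j, hj, hz⟩ := (p n).2.dense z (mem_univ z)
      obtain ⟨t, ht⟩ := exists_stepFunction_eq hj (p n).1.1
      exact ⟨t, ht ▸ hz.le.trans (hδle' n)⟩)
  refine ⟨⟨⟨φ, hφ⟩, ?_, ?_⟩, hsurj⟩
  · refine tendsto_nhds_unique (hlim 0) (tendsto_const_nhds.congr fun n => ?_)
    simp [stepFunction, (p n).2.start]
  · refine tendsto_nhds_unique (hlim 1) (tendsto_const_nhds.congr fun n => ?_)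
    simp [stepFunction, (p n).2.rest]

end Paths

end HahnMazurkiewicz

section Chains

/-- The chain of copies of `X` indexed by `ℕ`, where `b` in each copy is glued to `a` in the next
one, compactified by one point: a point `x` of the `n`-th copy is encoded as the sequence
`b, …, b, x, a, a, …`, the added point as `b, b, …`. -/
def chainSet {X : Type*} (a b : X) : Set (ℕ → X) :=
  {y | ∀ i j, i < j → y i = b ∨ y j = a}

/-- The initial point of the chain. -/
def chainBot {X : Type*} (a b : X) : chainSet a b :=
  ⟨fun _ => a, fun _ _ _ => .inr rfl⟩

/-- The point at infinity of the chain. -/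
def chainTop {X : Type*} (a b : X) : chainSet a b :=
  ⟨fun _ => b, fun _ _ _ => .inl rfl⟩

/-- The inclusion of the `n`-th copy of `X` into the chain. -/
def chainLink {X : Type*} (a b : X) (n : ℕ) (x : X) : chainSet a b :=
  ⟨fun i => if i < n then b else if i = n then x else a, fun i j hij => by
    by_cases hi : i < n
    · exact .inl (if_pos hi)
    · exact .inr ((if_neg (by omega)).trans (if_neg (by omega)))⟩

/-- The self-map of the chain that moves the `n`-th copy of `X` to the next one, by prepending `b`
to each sequence. -/
def chainShift {X : Type*} (a b : X) (y : chainSet a b) : chainSet a b :=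
  ⟨fun n => Nat.casesOn n b y.1, fun i j hij => by
    rcases i with _ | i
    · exact .inl rfl
    · obtain ⟨j, rfl⟩ := Nat.exists_eq_succ_of_ne_zero (Nat.ne_zero_of_lt hij)
      exact y.2 i j (Nat.lt_of_succ_lt_succ hij)⟩

/-- The map between chains induced by maps between the copies that preserve the gluing points. -/
def chainMap {X Z : Type*} {a b : X} {c d : Z} (h : ℕ → Z → X) (ha : ∀ n, h n c = a)
    (hb : ∀ n, h n d = b) (y : chainSet c d) : chainSet a b :=
  ⟨fun n => h n (y.1 n), fun i j hij => (y.2 i j hij).imp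
    (fun hi => (congrArg (h i) hi).trans (hb i)) fun hj => (congrArg (h j) hj).trans (ha j)⟩

section Sequences

variable {X Z : Type*} {a b : X} {c d : Z}

theorem chainLink_apply_lt {n i : ℕ} (x : X) (h : i < n) : (chainLink a b n x).1 i = b :=
  if_pos h

@[simp]
theorem chainLink_apply_self (n : ℕ) (x : X) : (chainLink a b n x).1 n = x :=
  (if_neg n.lt_irrefl).trans (if_pos rfl)

theorem chainLink_apply_gt {n i : ℕ} (x : X) (h : n < i) : (chainLink a b n x).1 i = a :=
  (if_neg h.not_gt).trans (if_neg h.ne')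

theorem eq_chainLink {y : chainSet a b} {n : ℕ} {x : X} (hlt : ∀ i < n, y.1 i = b)
    (hn : y.1 n = x) (hgt : ∀ i > n, y.1 i = a) : y = chainLink a b n x := by
  refine Subtype.ext (funext fun i => ?_)
  rcases lt_trichotomy i n with h | rfl | h
  · rw [chainLink_apply_lt _ h, hlt i h]
  · rw [chainLink_apply_self, hn]
  · rw [chainLink_apply_gt _ h, hgt i h]

theorem chainLink_right (n : ℕ) : chainLink a b n b = chainLink a b (n + 1) a := by
  refine eq_chainLink (fun i hi => ?_) (chainLink_apply_gt _ n.lt_succ_self)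
    fun i hi => chainLink_apply_gt _ (by omega)
  rcases (Nat.lt_succ_iff.1 hi).lt_or_eq with hi | rfl
  · exact chainLink_apply_lt _ hi
  · exact chainLink_apply_self i b

theorem eq_chainLink_of_ne {y : chainSet a b} {n : ℕ} (hlt : ∀ i < n, y.1 i = b)
    (hb : y.1 n ≠ b) : y = chainLink a b n (y.1 n) :=
  eq_chainLink hlt rfl fun i hi => (y.2 n i hi).resolve_left hb

theorem chainLink_apply_eq {y : chainSet a b} {n : ℕ} (ha : y.1 n ≠ a) (hb : y.1 n ≠ b) :
    chainLink a b n (y.1 n) = y :=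
  (eq_chainLink_of_ne (fun i hi => (y.2 i n hi).resolve_right ha) hb).symm

theorem eq_chainTop_or_exists_chainLink (y : chainSet a b) :
    y = chainTop a b ∨ ∃ n x, y = chainLink a b n x := by
  classical
  by_cases h : ∃ n, y.1 n ≠ b
  · exact .inr ⟨Nat.find h, _, eq_chainLink_of_ne (fun i hi => not_not.1 (Nat.find_min h hi))
      (Nat.find_spec h)⟩
  · push Not at h
    exact .inl (Subtype.ext (funext h))

theorem chainShift_chainLink (n : ℕ) (x : X) :
    chainShift a b (chainLink a b n x) = chainLink a b (n + 1) x := by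
  refine eq_chainLink (fun i hi => ?_) (chainLink_apply_self n x) fun i hi => ?_
  · rcases i with _ | i
    exacts [rfl, chainLink_apply_lt x (Nat.lt_of_succ_lt_succ hi)]
  · rcases i with _ | i
    exacts [absurd hi n.succ.not_lt_zero, chainLink_apply_gt x (Nat.lt_of_succ_lt_succ hi)]

theorem chainShift_iterate_chainLink_zero (n : ℕ) (x : X) :
    (chainShift a b)^[n] (chainLink a b 0 x) = chainLink a b n x := by
  induction n with
  | zero => rfl
  | succ n ih => rw [Function.iterate_succ_apply', ih, chainShift_chainLink]

theorem chainShift_iterate_apply_lt {k n : ℕ} (h : n < k) (y : chainSet a b) :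
    ((chainShift a b)^[k] y).1 n = b := by
  induction k generalizing n with
  | zero => exact absurd h n.not_lt_zero
  | succ k ih =>
    rw [Function.iterate_succ_apply']
    rcases n with _ | n
    exacts [rfl, ih (Nat.lt_of_succ_lt_succ h)]

theorem range_chainShift_union_range_chainLink_zero :
    range (chainShift a b) ∪ range (chainLink a b 0) = univ := by
  refine eq_univ_of_forall fun y => ?_
  by_cases hy : y.1 0 = b
  · refine .inl ⟨⟨fun n => y.1 (n + 1), fun i j hij => y.2 _ _ (by omega)⟩, ?_⟩
    refine Subtype.ext (funext fun n => ?_)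
    rcases n with _ | n
    exacts [hy.symm, rfl]
  · exact .inr ⟨_, (eq_chainLink_of_ne (fun i hi => absurd hi i.not_lt_zero) hy).symm⟩

variable {h : ℕ → Z → X} {ha : ∀ n, h n c = a} {hb : ∀ n, h n d = b}

theorem chainMap_chainLink (n : ℕ) (z : Z) :
    chainMap h ha hb (chainLink c d n z) = chainLink a b n (h n z) :=
  eq_chainLink (fun i hi => (congrArg (h i) (chainLink_apply_lt z hi)).trans (hb i))
    (congrArg (h n) (chainLink_apply_self n z))
    fun i hi => (congrArg (h i) (chainLink_apply_gt z hi)).trans (ha i)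

theorem surjective_chainMap (hh : ∀ n, Function.Surjective (h n)) :
    Function.Surjective (chainMap h ha hb) := by
  intro y
  rcases eq_chainTop_or_exists_chainLink y with rfl | ⟨n, x, rfl⟩
  · exact ⟨chainTop c d, Subtype.ext (funext hb)⟩
  · obtain ⟨z, rfl⟩ := hh n x
    exact ⟨chainLink c d n z, chainMap_chainLink n z⟩

end Sequences

section Topology

variable {X Z : Type*} {a b : X} {c d : Z} [TopologicalSpace X]

theorem continuous_chain_apply (n : ℕ) : Continuous fun y : chainSet a b => y.1 n :=
  (continuous_apply n).comp continuous_subtype_val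

theorem continuous_chainLink (n : ℕ) : Continuous (chainLink a b n) := by
  refine Continuous.subtype_mk (continuous_pi fun i => ?_) _
  split_ifs
  exacts [continuous_const, continuous_id, continuous_const]

theorem continuous_chainShift : Continuous (chainShift a b) := by
  refine Continuous.subtype_mk (continuous_pi fun i => ?_) _
  rcases i with _ | i
  exacts [continuous_const, continuous_chain_apply i]

theorem continuous_chainMap [TopologicalSpace Z] {h : ℕ → Z → X} {ha : ∀ n, h n c = a}
    {hb : ∀ n, h n d = b} (hh : ∀ n, Continuous (h n)) : Continuous (chainMap h ha hb) :=
  Continuous.subtype_mk (continuous_pi fun n => (hh n).comp (continuous_chain_apply n)) _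

theorem isClosed_chainSet [T1Space X] : IsClosed (chainSet a b) := by
  simp only [chainSet, ofPred_forall]
  exact isClosed_iInter fun i => isClosed_iInter fun j => isClosed_iInter fun _ =>
    (isClosed_singleton.preimage (continuous_apply i)).union
      (isClosed_singleton.preimage (continuous_apply j))

instance [T1Space X] [CompactSpace X] : CompactSpace (chainSet a b) :=
  isCompact_iff_compactSpace.1 isClosed_chainSet.isCompact

theorem tendsto_chainLink_chainTop (x : ℕ → X) :
    Tendsto (fun n => chainLink a b n (x n)) atTop (𝓝 (chainTop a b)) := by
  rw [tendsto_subtype_rng, tendsto_pi_nhds]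
  refine fun i => tendsto_const_nhds.congr' ?_
  filter_upwards [eventually_gt_atTop i] with n hn using (chainLink_apply_lt _ hn).symm

instance [ConnectedSpace X] : ConnectedSpace (chainSet a b) := by
  have hpre : IsPreconnected (⋃ n, range (chainLink a b n)) :=
    IsPreconnected.iUnion_of_chain (fun n => isPreconnected_range (continuous_chainLink n))
      fun n => ⟨chainLink a b n b, mem_range_self _, a, (chainLink_right n).symm⟩
  have hmem : ∀ n x, chainLink a b n x ∈ ⋃ n, range (chainLink a b n) :=
    fun n x => mem_iUnion.2 ⟨n, mem_range_self x⟩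
  have hdense : closure (⋃ n, range (chainLink a b n)) = univ := by
    refine eq_univ_of_forall fun y => ?_
    rcases eq_chainTop_or_exists_chainLink y with rfl | ⟨n, x, rfl⟩
    · exact mem_closure_of_tendsto (tendsto_chainLink_chainTop fun _ => b)
        (.of_forall fun n => hmem n b)
    · exact subset_closure (hmem n x)
  exact { isPreconnected_univ := hdense ▸ hpre.closure
          toNonempty := ⟨chainTop a b⟩ }

end Topology

theorem tendsto_uniformity_chainSet_iff {X α : Type*} [UniformSpace X] {a b : X}
    {l : Filter α} {f : α → chainSet a b × chainSet a b} :
    Tendsto f l (𝓤 (chainSet a b)) ↔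
      ∀ n, Tendsto (fun i => ((f i).1.1 n, (f i).2.1 n)) l (𝓤 X) := by
  simp only [uniformity_subtype, Pi.uniformity, tendsto_comap_iff, tendsto_iInf,
    Function.comp_def]

end Chains

section ContractionFilter

variable {Y : Type*} {F : Set (Y → Y)}

/-- The filter generated by the sets of pairs of points lying in a common image of `Y` under a
composition of `k` maps from `F`, for `k : ℕ`. The family `F` is topologically contractive when this
filter is finer than the uniformity. -/
def contractionFilter (F : Set (Y → Y)) : Filter (Y × Y) :=
  ⨅ k, 𝓟 (⋃ g ∈ compositions F k, range g ×ˢ range g)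

theorem eventually_contractionFilter {P : Y → Y → Prop} :
    (∀ᶠ p in contractionFilter F, P p.1 p.2) ↔
      ∃ k, ∀ g ∈ compositions F k, ∀ x y, P (g x) (g y) := by
  have hanti : Antitone fun k => ⋃ g ∈ compositions F k, range g ×ˢ range g := by
    refine antitone_nat_of_succ_le fun k => iUnion₂_subset fun g hg => ?_
    rw [compositions_succ_right] at hg
    obtain ⟨g, hg, f, -, rfl⟩ := hg
    exact subset_iUnion₂_of_subset g hg (prod_mono (range_comp_subset_range f g)
      (range_comp_subset_range f g))
  rw [contractionFilter, Filter.Eventually, mem_iInf_of_directed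
    (Antitone.directed_ge fun _ _ h => principal_mono.2 (hanti h))]
  simp only [mem_principal, iUnion_subset_iff, prod_subset_iff, forall_mem_range, mem_ofPred_eq]

theorem eventually_contractionFilter_of_comp (hF : F.Finite) {P : Y → Y → Prop}
    (h : ∀ f ∈ F, ∀ᶠ p in contractionFilter F, P (f p.1) (f p.2)) :
    ∀ᶠ p in contractionFilter F, P p.1 p.2 := by
  obtain ⟨k, hk⟩ := (eventually_contractionFilter (P := fun x y => ∀ f ∈ F, P (f x) (f y))).1
    ((eventually_all_finite hF).2 h)
  refine eventually_contractionFilter.2 ⟨k + 1, fun g hg => ?_⟩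
  rw [compositions_succ] at hg
  obtain ⟨f, hf, g, hg, rfl⟩ := hg
  exact fun x y => hk g hg x y f hf

theorem eventually_contractionFilter_of_iterate {s f : Y → Y} {P : Y → Y → Prop} (n : ℕ)
    (hs : ∀ᶠ p in contractionFilter {s, f}, P (s^[n] p.1) (s^[n] p.2))
    (hf : ∀ j < n, ∀ᶠ p in contractionFilter {s, f}, P (s^[j] (f p.1)) (s^[j] (f p.2))) :
    ∀ᶠ p in contractionFilter {s, f}, P p.1 p.2 := by
  induction n with
  | zero => exact hs
  | succ n ih =>
    refine ih (eventually_contractionFilter_of_comp (toFinite _)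
      (P := fun x y => P (s^[n] x) (s^[n] y)) ?_) fun j hj => hf j (hj.trans n.lt_succ_self)
    rintro g (rfl | rfl)
    exacts [hs, hf n n.lt_succ_self]

theorem topContractive_of_contractionFilter_le [MetricSpace Y] (h : contractionFilter F ≤ 𝓤 Y) :
    TopContractive F :=
  topContractive_of_forall_dist_lt fun ε hε =>
    (eventually_contractionFilter (P := fun x y => dist x y < ε)).1
      (h (Metric.dist_mem_uniformity hε))

end ContractionFilter

section LinkShrinkingMaps

/-- A sequence of maps from the chain over `X` onto `X` that preserve the gluing points, the `m`-th
of which shrinks the links to a size below `1 / (m + 1)`, even after the application of a map from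
the class `outer m`. Precomposing a map of this class with the restriction of the `m`-th map to a
link leads into the next class. The conditions for taking the values `a` and `b` say that the `m`-th
map disregards the coordinates outside the interval from `m + 1` to `bound m`. -/
structure LinkShrinkingMaps {X : Type*} [MetricSpace X] (a b : X) where
  toFun : ℕ → chainSet a b → X
  bound : ℕ → ℕ
  outer : ℕ → Set (X → X)
  continuous : ∀ m, Continuous (toFun m)
  surjective : ∀ m, Function.Surjective (toFun m)
  eq_left : ∀ m z, (∀ i > m, z.1 i = a) → toFun m z = a
  eq_right : ∀ m z, (∀ i ≤ bound m, z.1 i = b) → toFun m z = b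
  monotone_outer : Monotone outer
  id_mem_outer : ∀ m, id ∈ outer m
  comp_mem_outer : ∀ m, ∀ β ∈ outer m, ∀ n, β ∘ toFun m ∘ chainLink a b n ∈ outer (m + 1)
  dist_lt : ∀ (m : ℕ), ∀ β ∈ outer m, ∀ n x y,
    dist (β (toFun m (chainLink a b n x))) (β (toFun m (chainLink a b n y))) < 1 / ((m : ℝ) + 1)

section ChainMean

variable {X : Type*} {a b : X} {t : X → ℝ}

/-- The average of `t` over the `N` coordinates following the `m`-th one. -/
noncomputable def chainMean (t : X → ℝ) (m N : ℕ) (z : chainSet a b) : ℝ :=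
  (∑ i ∈ Finset.Ioc m (m + N), t (z.1 i)) / N

theorem continuous_chainMean [TopologicalSpace X] (ht : Continuous t) (m N : ℕ) :
    Continuous (chainMean (a := a) (b := b) t m N) :=
  (continuous_finsetSum _ fun _ _ => ht.comp (continuous_chain_apply _)).div_const _

theorem chainMean_eq_zero (ha : t a = 0) {m N : ℕ} {z : chainSet a b}
    (h : ∀ i > m, z.1 i = a) : chainMean t m N z = 0 := by
  rw [chainMean, Finset.sum_eq_zero fun i hi => by rw [h i (Finset.mem_Ioc.1 hi).1, ha], zero_div]

theorem chainMean_eq_one (hb : t b = 1) {m N : ℕ} (hN : 0 < N) {z : chainSet a b}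
    (h : ∀ i ≤ m + N, z.1 i = b) : chainMean t m N z = 1 := by
  rw [chainMean, Finset.sum_congr rfl fun i hi => by rw [h i (Finset.mem_Ioc.1 hi).2, hb]]
  simp [hN.ne']

theorem abs_chainMean_chainLink_sub_le (m N n : ℕ) (x y : X) :
    |chainMean t m N (chainLink a b n x) - chainMean t m N (chainLink a b n y)| ≤
      |t x - t y| / N := by
  have hsub : ∀ i, t ((chainLink a b n x).1 i) - t ((chainLink a b n y).1 i) =
      if n = i then t x - t y else 0 := by
    intro i
    rcases lt_trichotomy i n with h | rfl | h
    · rw [chainLink_apply_lt _ h, chainLink_apply_lt _ h, sub_self, if_neg h.ne']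
    · rw [chainLink_apply_self, chainLink_apply_self, if_pos rfl]
    · rw [chainLink_apply_gt _ h, chainLink_apply_gt _ h, sub_self, if_neg h.ne]
  rw [chainMean, chainMean, ← sub_div, abs_div, Nat.abs_cast, ← Finset.sum_sub_distrib]
  refine div_le_div_of_nonneg_right ?_ N.cast_nonneg
  simp only [hsub, Finset.sum_ite_eq]
  split_ifs
  · rfl
  · simp

end ChainMean

variable {X : Type*} [MetricSpace X] {a b : X}

theorem uniformContinuous_pathExtend (γ : Path a b) : UniformContinuous γ.extend :=
  (CompactSpace.uniformContinuous_of_continuous γ.continuous).comp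
    (LipschitzWith.projIcc zero_le_one).uniformContinuous

/-- The self-maps of `X` that first reparametrise by a real function varying at most as much as `t`
and then follow the path `γ`. -/
def pathMaps (γ : Path a b) (t : X → ℝ) : Set (X → X) :=
  {β | ∃ u : X → ℝ, (∀ x y, |u x - u y| ≤ |t x - t y|) ∧ β = γ.extend ∘ u}

theorem uniformEquicontinuous_pathMaps (γ : Path a b) {t : X → ℝ} (ht : UniformContinuous t) :
    (pathMaps γ t).UniformEquicontinuous := by
  refine Metric.uniformEquicontinuous_iff.2 fun ε hε => ?_
  obtain ⟨δ, hδ, hγ⟩ := Metric.uniformContinuous_iff.1 (uniformContinuous_pathExtend γ) ε hε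
  obtain ⟨η, hη, ht⟩ := Metric.uniformContinuous_iff.1 ht δ hδ
  refine ⟨η, hη, ?_⟩
  rintro x y hxy ⟨_, u, hu, rfl⟩
  exact hγ ((hu x y).trans_lt (ht hxy))

theorem exists_dist_lt_of_abs_sub_le {F : Set (X → X)} (hF : F.UniformEquicontinuous)
    (γ : Path a b) {ε : ℝ} (hε : 0 < ε) :
    ∃ N > 0, ∀ β ∈ F, ∀ u v : ℝ, |u - v| ≤ 1 / (N : ℕ) →
      dist (β (γ.extend u)) (β (γ.extend v)) < ε := by
  obtain ⟨δ, hδ, hF⟩ := Metric.uniformEquicontinuous_iff.1 hF ε hε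
  obtain ⟨η, hη, hγ⟩ := Metric.uniformContinuous_iff.1 (uniformContinuous_pathExtend γ) δ hδ
  obtain ⟨N, hN⟩ := exists_nat_one_div_lt hη
  exact ⟨N + 1, N.succ_pos, fun β hβ u v huv => hF _ _ (hγ (huv.trans_lt (mod_cast hN))) ⟨β, hβ⟩⟩

theorem surjective_pathExtend_chainMean [ConnectedSpace X] {γ : Path a b}
    (hγ : Function.Surjective γ) {t : X → ℝ} (ht : Continuous t) (ha : t a = 0)
    (hb : t b = 1) (m : ℕ) {N : ℕ} (hN : 0 < N) :
    Function.Surjective fun z : chainSet a b => γ.extend (chainMean t m N z) := by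
  intro x
  obtain ⟨u, rfl⟩ := hγ x
  obtain ⟨z, hz⟩ := intermediate_value_univ (chainBot a b) (chainTop a b)
    (continuous_chainMean ht m N) (show u.1 ∈ _ by
      rw [chainMean_eq_zero ha fun _ _ => rfl, chainMean_eq_one hb hN fun _ _ => rfl]
      exact u.2)
  exact ⟨z, (congrArg γ.extend hz).trans (γ.extend_apply u.2)⟩

theorem nonempty_linkShrinkingMaps [CompactSpace X] [ConnectedSpace X] [LocallyConnectedSpace X]
    (hab : a ≠ b) : Nonempty (LinkShrinkingMaps a b) := by
  obtain ⟨γ, hγ⟩ := exists_path_surjective a b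
  obtain ⟨t, hta, htb, htI⟩ := exists_continuous_zero_one_of_isClosed
    (isClosed_singleton (x := a)) (isClosed_singleton (x := b)) (by simpa using hab)
  replace hta : t a = 0 := hta rfl
  replace htb : t b = 1 := htb rfl
  have ht1 : ∀ x y, |t x - t y| ≤ 1 := fun x y =>
    abs_sub_le_of_nonneg_of_le (htI x).1 (htI x).2 (htI y).1 (htI y).2
  have houter := uniformEquicontinuous_compositions (uniformEquicontinuous_insert_id
    (uniformEquicontinuous_pathMaps γ
      (CompactSpace.uniformContinuous_of_continuous t.continuous)))
  choose N hN hdist using fun m : ℕ => exists_dist_lt_of_abs_sub_le (houter m) γ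
    (Nat.one_div_pos_of_nat (α := ℝ) (n := m))
  exact ⟨{
    toFun := fun m z => γ.extend (chainMean t m (N m) z)
    bound := fun m => m + N m
    outer := compositions (insert id (pathMaps γ t))
    continuous := fun m => γ.continuous_extend.comp (continuous_chainMean t.continuous m (N m))
    surjective := fun m => surjective_pathExtend_chainMean hγ t.continuous hta htb m (hN m)
    eq_left := fun m z hz => by rw [chainMean_eq_zero hta hz, γ.extend_zero]
    eq_right := fun m z hz => by rw [chainMean_eq_one htb (hN m) hz, γ.extend_one]
    monotone_outer := monotone_compositions (mem_insert _ _)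
    id_mem_outer := id_mem_compositions (mem_insert _ _)
    comp_mem_outer := fun m β hβ n => by
      rw [compositions_succ_right]
      refine mem_image2_of_mem hβ (.inr ⟨_, fun x y => ?_, rfl⟩)
      exact (abs_chainMean_chainLink_sub_le m (N m) n x y).trans
        (div_le_self (abs_nonneg _) (mod_cast hN m))
    dist_lt := fun m β hβ n x y => hdist m β hβ _ _ <|
      (abs_chainMean_chainLink_sub_le m (N m) n x y).trans
        (div_le_div_of_nonneg_right (ht1 x y) (N m).cast_nonneg) }⟩

end LinkShrinkingMaps

section DoubleChain

section Coordinates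

variable {X : Type*} {a b : X}

/-- The chain of copies of the chain over `X`. -/
abbrev doubleChain (a b : X) : Set (ℕ → chainSet a b) :=
  chainSet (chainBot a b) (chainTop a b)

/-- The retraction of the double chain onto its `i.2`-th copy of `X` in the `i.1`-th chain. -/
def doubleChainProj (i : ℕ × ℕ) (y : doubleChain a b) : X :=
  (y.1 i.1).1 i.2

/-- The inclusion of the `i.2`-th copy of `X` in the `i.1`-th chain into the double chain. -/
def doubleChainLink (a b : X) (i : ℕ × ℕ) (x : X) : doubleChain a b :=
  chainLink _ _ i.1 (chainLink a b i.2 x)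

theorem doubleChainProj_doubleChainLink (i : ℕ × ℕ) :
    Function.LeftInverse (doubleChainProj i) (doubleChainLink a b i) := fun x => by
  rw [doubleChainProj, doubleChainLink, chainLink_apply_self, chainLink_apply_self]

theorem doubleChainLink_doubleChainProj {i : ℕ × ℕ} {y : doubleChain a b}
    (hy : doubleChainProj i y ∉ ({a, b} : Set X)) :
    doubleChainLink a b i (doubleChainProj i y) = y := by
  rw [mem_insert_iff, mem_singleton_iff, not_or] at hy
  rw [doubleChainLink, doubleChainProj, chainLink_apply_eq hy.1 hy.2]
  exact chainLink_apply_eq (fun h => hy.1 (congrArg (·.1 i.2) h))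
    fun h => hy.2 (congrArg (·.1 i.2) h)

theorem doubleChain_ext {y z : doubleChain a b}
    (h : ∀ i, doubleChainProj i y = doubleChainProj i z) : y = z :=
  Subtype.ext (funext fun p => Subtype.ext (funext fun q => h (p, q)))

theorem nontrivial_doubleChain (hab : a ≠ b) : Nontrivial (doubleChain a b) :=
  ⟨chainBot _ _, chainTop _ _, fun h => hab (congrArg (doubleChainProj (0, 0)) h)⟩

variable [TopologicalSpace X]

theorem continuous_doubleChainProj (i : ℕ × ℕ) :
    Continuous (doubleChainProj (a := a) (b := b) i) :=
  (continuous_chain_apply _).comp (continuous_chain_apply _)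

theorem continuous_doubleChainLink (i : ℕ × ℕ) : Continuous (doubleChainLink a b i) :=
  (continuous_chainLink _).comp (continuous_chainLink _)

end Coordinates

namespace LinkShrinkingMaps

variable {X : Type*} [MetricSpace X] {a b : X} (S : LinkShrinkingMaps a b)

/-- The map from the double chain to the chain that acts by the `m`-th map on the `m`-th chain. -/
def collapse : doubleChain a b → chainSet a b :=
  chainMap S.toFun (fun m => S.eq_left m _ fun _ _ => rfl) fun m => S.eq_right m _ fun _ _ => rfl

/-- The map of the double chain onto its first chain. -/
def fold : doubleChain a b → doubleChain a b :=
  chainLink (chainBot a b) (chainTop a b) 0 ∘ S.collapse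

/-- The two self-maps that turn the double chain into a topological fractal. -/
abbrev fractalMaps : Set (doubleChain a b → doubleChain a b) :=
  {chainShift (chainBot a b) (chainTop a b), S.fold}

theorem chainShift_iterate_fold (j : ℕ) (y : doubleChain a b) :
    (chainShift (chainBot a b) (chainTop a b))^[j] (S.fold y) = chainLink _ _ j (S.collapse y) :=
  chainShift_iterate_chainLink_zero j _

theorem collapse_iterate_chainShift_apply_lt {i n : ℕ} (h : i < n) (y : doubleChain a b) :
    (S.collapse ((chainShift (chainBot a b) (chainTop a b))^[n] y)).1 i = b :=
  (congrArg (S.toFun i) (chainShift_iterate_apply_lt h y)).trans (S.eq_right i _ fun _ _ => rfl)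

theorem collapse_iterate_chainShift_fold (j : ℕ) (y : doubleChain a b) :
    S.collapse ((chainShift (chainBot a b) (chainTop a b))^[j] (S.fold y)) =
      chainLink a b j (S.toFun j (S.collapse y)) := by
  rw [chainShift_iterate_fold, collapse, chainMap_chainLink]

theorem eventually_dist_collapse_lt {u : chainSet a b → X} {n : ℕ} {c : X} {ε : ℝ} (hε : 0 < ε)
    (hc : ∀ z : chainSet a b, (∀ i < n, z.1 i = b) → u z = c)
    (h : ∀ j < n, ∀ᶠ p in contractionFilter S.fractalMaps,
      dist (u (chainLink a b j (S.toFun j (S.collapse p.1))))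
        (u (chainLink a b j (S.toFun j (S.collapse p.2)))) < ε) :
    ∀ᶠ p in contractionFilter S.fractalMaps,
      dist (u (S.collapse p.1)) (u (S.collapse p.2)) < ε := by
  refine eventually_contractionFilter_of_iterate
    (P := fun x y => dist (u (S.collapse x)) (u (S.collapse y)) < ε) n
    (.of_forall fun p => ?_) fun j hj => ?_
  · rw [hc _ fun i hi => S.collapse_iterate_chainShift_apply_lt hi p.1,
      hc _ fun i hi => S.collapse_iterate_chainShift_apply_lt hi p.2, dist_self]
    exact hε
  · simp only [collapse_iterate_chainShift_fold]
    exact h j hj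

theorem eventually_dist_toFun_collapse_lt {ε : ℝ} (hε : 0 < ε) (m : ℕ) :
    ∀ β ∈ S.outer m, ∀ᶠ p in contractionFilter S.fractalMaps,
      dist (β (S.toFun m (S.collapse p.1))) (β (S.toFun m (S.collapse p.2))) < ε := by
  obtain ⟨Q, hQ⟩ := exists_nat_one_div_lt hε
  induction m using Nat.strong_decreasing_induction with
  | base =>
    refine ⟨Q, fun m hm β hβ => S.eventually_dist_collapse_lt hε
      (u := fun z => β (S.toFun m z)) (n := S.bound m + 1)
      (fun z hz => congrArg β (S.eq_right m z fun i hi => hz i (Nat.lt_succ_of_le hi)))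
      fun j _ => .of_forall fun p => ?_⟩
    refine (S.dist_lt m β hβ j _ _).trans (lt_of_le_of_lt ?_ hQ)
    exact Nat.one_div_le_one_div hm.le
  | step m ih =>
    refine fun β hβ => S.eventually_dist_collapse_lt hε
      (u := fun z => β (S.toFun m z)) (n := S.bound m + 1)
      (fun z hz => congrArg β (S.eq_right m z fun i hi => hz i (Nat.lt_succ_of_le hi)))
      fun j _ => ?_
    rcases le_or_gt j m with hj | hj
    · have hleft : ∀ x, S.toFun m (chainLink a b j x) = a := fun x =>
        S.eq_left m _ fun i hi => chainLink_apply_gt x (hj.trans_lt hi)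
      simp only [hleft, dist_self, hε, eventually_true]
    · exact ih j hj _ (S.monotone_outer hj (S.comp_mem_outer m β hβ j))

theorem eventually_dist_collapse_apply_lt {ε : ℝ} (hε : 0 < ε) (m : ℕ) :
    ∀ᶠ p in contractionFilter S.fractalMaps,
      dist ((S.collapse p.1).1 m) ((S.collapse p.2).1 m) < ε := by
  refine S.eventually_dist_collapse_lt hε (u := fun z => z.1 m) (n := m + 1)
    (fun z hz => hz m m.lt_succ_self) fun j hj => ?_
  rcases (Nat.lt_succ_iff.1 hj).eq_or_lt with rfl | hj
  · simp only [chainLink_apply_self]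
    exact S.eventually_dist_toFun_collapse_lt hε j id (S.id_mem_outer j)
  · simp only [chainLink_apply_gt _ hj, dist_self, hε, eventually_true]

theorem eventually_dist_doubleChainProj_lt {ε : ℝ} (hε : 0 < ε) (i : ℕ × ℕ) :
    ∀ᶠ p in contractionFilter S.fractalMaps,
      dist (doubleChainProj i p.1) (doubleChainProj i p.2) < ε := by
  refine eventually_contractionFilter_of_iterate
    (P := fun x y => dist (doubleChainProj i x) (doubleChainProj i y) < ε) (i.1 + 1)
    (.of_forall fun p => ?_) fun j hj => ?_
  · simp only [doubleChainProj, chainShift_iterate_apply_lt i.1.lt_succ_self, dist_self, hε]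
  simp only [doubleChainProj, chainShift_iterate_fold]
  rcases (Nat.lt_succ_iff.1 hj).eq_or_lt with rfl | hj
  · simp only [chainLink_apply_self]
    exact S.eventually_dist_collapse_apply_lt hε i.2
  · simp only [chainLink_apply_gt _ hj, dist_self, hε, eventually_true]

theorem contractionFilter_fractalMaps_le :
    contractionFilter S.fractalMaps ≤ 𝓤 (doubleChain a b) := by
  refine tendsto_id'.1 (tendsto_uniformity_chainSet_iff.2 fun p =>
    tendsto_uniformity_chainSet_iff.2 fun q =>
      Metric.uniformity_basis_dist.tendsto_right_iff.2 fun ε hε => ?_)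
  exact S.eventually_dist_doubleChainProj_lt hε (p, q)

theorem continuous_of_mem_fractalMaps {f : doubleChain a b → doubleChain a b}
    (hf : f ∈ S.fractalMaps) : Continuous f := by
  rcases hf with rfl | rfl
  · exact continuous_chainShift
  · exact (continuous_chainLink 0).comp (continuous_chainMap S.continuous)

theorem iUnion_range_fractalMaps : ⋃ f ∈ S.fractalMaps, range f = univ := by
  have hsurj : Function.Surjective S.collapse := surjective_chainMap S.surjective
  rw [biUnion_pair, fold, hsurj.range_comp, range_chainShift_union_range_chainLink_zero]

end LinkShrinkingMaps

variable {X : Type*} [MetricSpace X] {a b : X}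

noncomputable instance : MetricSpace (doubleChain a b) :=
  UniformSpace.metricSpace _

theorem isTopFractal_doubleChain [CompactSpace X] [ConnectedSpace X] [LocallyConnectedSpace X]
    (hab : a ≠ b) : IsTopFractal (doubleChain a b) := by
  obtain ⟨S⟩ := nonempty_linkShrinkingMaps hab
  exact ⟨S.fractalMaps, toFinite _, fun _ => S.continuous_of_mem_fractalMaps,
    topContractive_of_contractionFilter_le S.contractionFilter_fractalMaps_le,
    S.iUnion_range_fractalMaps⟩

end DoubleChain

section Transfer

theorem exists_apply_notMem_of_isOpen {Y X ι : Type*} [TopologicalSpace Y] [T1Space Y]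
    [ConnectedSpace Y] [LocallyConnectedSpace Y] [Nontrivial Y] [MetricSpace X]
    {r : ι → Y → X} (hr : ∀ i, Continuous (r i)) (hsep : ∀ y y', (∀ i, r i y = r i y') → y = y')
    {F : Set X} (hF : F.Countable) {U : Set Y} (hU : IsOpen U) (hne : U.Nonempty) :
    ∃ y ∈ U, ∃ i, r i y ∉ F := by
  by_contra! h
  obtain ⟨w, hw⟩ := hne
  have hsub : (connectedComponentIn U w).Subsingleton := fun y hy y' hy' =>
    hsep y y' fun i => hF.isTotallyDisconnected _
      (image_subset_iff.2 fun z hz => h z (connectedComponentIn_subset _ _ hz) i)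
      (isPreconnected_connectedComponentIn.image _ (hr i).continuousOn)
      (mem_image_of_mem _ hy) (mem_image_of_mem _ hy')
  exact infinite_of_mem_nhds w (hU.connectedComponentIn.mem_nhds (mem_connectedComponentIn hw))
    hsub.finite

theorem mem_interior_image_of_leftInverse {Y X : Type*} [TopologicalSpace Y] [TopologicalSpace X]
    {C : Set Y} {r : Y → X} {e : X → Y} (he : Continuous e) (hre : Function.LeftInverse r e)
    {x : X} (hx : e x ∈ interior C) : x ∈ interior (r '' C) :=
  mem_interior.2 ⟨e ⁻¹' interior C, fun z hz => ⟨e z, interior_subset hz, hre z⟩,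
    isOpen_interior.preimage he, hx⟩

theorem SelfRegenFractal.image_of_retraction {Y X : Type*} [MetricSpace Y] [MetricSpace X]
    {C : Set Y} (hC : IsCompact C) (hconn : IsConnected C) (hreg : SelfRegenFractal C)
    {r : Y → X} {e : X → Y} (hr : Continuous r) (he : Continuous e)
    (hre : Function.LeftInverse r e) {F : Set X} (hF : F.Finite)
    (her : ∀ y, r y ∉ F → e (r y) = y) (hnt : (r '' C).Nontrivial) :
    SelfRegenFractal (r '' C) := by
  have : CompactSpace C := isCompact_iff_compactSpace.1 hC
  have : ConnectedSpace (r '' C) :=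
    isConnected_iff_connectedSpace.1 (hconn.image r hr.continuousOn)
  have : Nontrivial (r '' C) := hnt.coe_sort
  set K : Set (r '' C) := Subtype.val ⁻¹' F
  have hK : K.Finite := hF.preimage Subtype.val_injective.injOn
  have hdense : Dense Kᶜ := by
    rw [compl_eq_univ_sdiff]
    exact dense_univ.sdiff_finite hK
  have heC : ∀ x : r '' C, e x ∈ C := by
    have hcl : IsClosed {x : r '' C | e x ∈ C} :=
      hC.isClosed.preimage (he.comp continuous_subtype_val)
    refine fun x => hcl.closure_subset_iff.2 ?_ (hdense x)
    rintro ⟨_, z, hz, rfl⟩ hx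
    change e (r z) ∈ C
    rwa [her z hx]
  exact hreg.of_retraction (r := fun z => ⟨r z, mem_image_of_mem r z.2⟩)
    (e := fun x => ⟨e x, heC x⟩) (by fun_prop) (by fun_prop) (fun x => Subtype.ext (hre x))
    hK.isClosed (interior_eq_empty_iff_dense_compl.2 hdense)
    fun z hz => Subtype.ext (her z hz)

theorem SelfRegenFractal.exists_of_doubleChain {X : Type*} [MetricSpace X] [CompactSpace X]
    [ConnectedSpace X] [LocallyConnectedSpace X] {a b : X} (hab : a ≠ b)
    {R : Set (doubleChain a b)} (hR : IsCompact R) (hreg : SelfRegenFractal R)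
    (hint : (interior R).Nonempty) :
    ∃ B : Set X, IsCompact B ∧ SelfRegenFractal B ∧ IsConnected B ∧ LocallyConnectedSpace B ∧
      (interior B).Nonempty := by
  have : Nontrivial X := ⟨a, b, hab⟩
  have := nontrivial_doubleChain hab
  have := (isTopFractal_doubleChain hab).locallyConnectedSpace
  obtain ⟨C, hC, hconn, hreg, hint⟩ := hreg.exists_isConnected hR hint
  have hF : ({a, b} : Set X).Finite := toFinite _
  obtain ⟨y, hy, i, hi⟩ := exists_apply_notMem_of_isOpen continuous_doubleChainProj
    (fun _ _ => doubleChain_ext) hF.countable isOpen_interior hint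
  have hr := continuous_doubleChainProj (a := a) (b := b) i
  have he := continuous_doubleChainLink (a := a) (b := b) i
  have hre := doubleChainProj_doubleChainLink (a := a) (b := b) i
  have hyB := mem_interior_image_of_leftInverse he hre
    (x := doubleChainProj i y) (by rwa [doubleChainLink_doubleChainProj hi])
  have hnt := (infinite_of_mem_nhds _ (mem_interior_iff_mem_nhds.1 hyB)).nontrivial
  have hB := hreg.image_of_retraction hC hconn hr he hre hF
    (fun _ => doubleChainLink_doubleChainProj) hnt
  have hBk := hC.image hr
  have hBc := hconn.image _ hr.continuousOn
  have := isCompact_iff_compactSpace.1 hBk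
  have := isConnected_iff_connectedSpace.1 hBc
  exact ⟨_, hBk, hB, hBc, hB.isTopFractal.locallyConnectedSpace, _, hyB⟩

end Transfer

/-- The following are equivalent:
(1) every Peano continuum which is a topological fractal contains a (compact)
self-regenerating fractal with nonempty interior;
(2) every Peano continuum contains a Peano self-regenerating fractal with nonempty
interior. -/
theorem selfRegenerating_in_fractals_iff_in_all_peano_continua :
    (∀ (X : Type) [MetricSpace X] [CompactSpace X] [ConnectedSpace X]
        [LocallyConnectedSpace X] [Nonempty X],
      IsTopFractal X →
        ∃ R : Set X, IsCompact R ∧ SelfRegenFractal R ∧ (interior R).Nonempty) ↔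
    (∀ (X : Type) [MetricSpace X] [CompactSpace X] [ConnectedSpace X]
        [LocallyConnectedSpace X] [Nonempty X],
      ∃ R : Set X, IsCompact R ∧ SelfRegenFractal R ∧
        IsConnected R ∧ LocallyConnectedSpace R ∧ (interior R).Nonempty) := by
  refine ⟨fun H X _ _ _ _ _ => ?_, fun H X _ _ _ _ _ _ => ?_⟩
  · rcases subsingleton_or_nontrivial X with _ | _
    · exact ⟨univ, isCompact_univ, .of_subsingleton, isConnected_univ,
        SelfRegenFractal.of_subsingleton.isTopFractal.locallyConnectedSpace, by simp⟩
    · obtain ⟨a, b, hab⟩ := exists_pair_ne X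
      have hfractal := isTopFractal_doubleChain hab
      have := hfractal.locallyConnectedSpace
      obtain ⟨R, hR, hreg, hint⟩ := H (doubleChain a b) hfractal
      exact hreg.exists_of_doubleChain hab hR hint
  · obtain ⟨R, hR, hreg, -, -, hint⟩ := H X
    exact ⟨R, hR, hreg, hint⟩
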